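/- For a two-user NOMA cluster with channel gains h₁ ≥ h₂ > 0 and total power budget q > 0, among all (p₁,p₂) with p₁,p₂ ≥ 0, p₁+p₂ = q, and log(1 + p₂h₂/(p₁h₂+1)) ≥ R (the weak user's minimum rate, with R ≥ 0 and the constraint set nonempty), the sum-rate log(1+p₁h₁) + log(1 + p₂h₂/(p₁h₂+1)) is maximized by making the weak user's rate constraint tight, i.e., p₂ = β(q + 1/h₂) where β = (e^R − 1)/e^R, and p₁ = q − p₂. -/

import Mathlib

/-!
On the budget line `p₁ + p₂ = q` the interference term telescopes,
`1 + p₂ h₂ / (p₁ h₂ + 1) = (1 + q h₂) / (p₁ h₂ + 1)`, so the sum-rate equals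
`log ((1 + p₁ h₁) / (p₁ h₂ + 1)) + log (1 + q h₂)`, which is nondecreasing in `p₁ ≥ 0` because
`h₂ ≤ h₁`. The rate constraint is the upper bound `p₁ h₂ + 1 ≤ (1 + q h₂) / e^R`, and since
`1 - β = e^{-R}` it is attained with equality at `p₁ = q - β (q + 1 / h₂)`.
-/

theorem weak_user_sinr_eq {h2 p1 p2 q : ℝ} (hp : p1 + p2 = q) (hpos : 0 < p1 * h2 + 1) :
    1 + p2 * h2 / (p1 * h2 + 1) = (1 + q * h2) / (p1 * h2 + 1) := by
  subst hp
  rw [eq_div_iff hpos.ne', add_mul, div_mul_cancel₀ _ hpos.ne']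
  ring

/-- The sum-rate along the budget line is nondecreasing in the strong user's power. -/
theorem sum_rate_mono {h1 h2 q p1 p2 s1 s2 : ℝ} (hh2 : 0 < h2) (hle : h2 ≤ h1) (hq : 0 < q)
    (hp1 : 0 ≤ p1) (hps : p1 ≤ s1) (hp : p1 + p2 = q) (hs : s1 + s2 = q) :
    Real.log (1 + p1 * h1) + Real.log (1 + p2 * h2 / (p1 * h2 + 1))
      ≤ Real.log (1 + s1 * h1) + Real.log (1 + s2 * h2 / (s1 * h2 + 1)) := by
  have hh1 : 0 < h1 := hh2.trans_le hle
  have hs1 : 0 ≤ s1 := hp1.trans hps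
  have a : 0 < p1 * h2 + 1 := by positivity
  have b : 0 < s1 * h2 + 1 := by positivity
  rw [weak_user_sinr_eq hp a, weak_user_sinr_eq hs b,
    ← Real.log_mul (by positivity) (by positivity),
    ← Real.log_mul (by positivity) (by positivity)]
  apply Real.log_le_log (by positivity)
  rw [mul_div_assoc', mul_div_assoc', div_le_div_iff₀ a b]
  have hc : 0 ≤ 1 + q * h2 := by positivity
  -- The two cross products differ by `(s1 - p1) * (h1 - h2)`.
  have key : (1 + p1 * h1) * (s1 * h2 + 1) ≤ (1 + s1 * h1) * (p1 * h2 + 1) := by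
    nlinarith [mul_nonneg (sub_nonneg.2 hps) (sub_nonneg.2 hle)]
  nlinarith [mul_le_mul_of_nonneg_left key hc]

theorem noma_two_user_optimal_power_split
    (h1 h2 q R : ℝ) (hh2 : 0 < h2) (hle : h2 ≤ h1) (hq : 0 < q) (hR : 0 ≤ R)
    (β : ℝ) (hβ : β = (Real.exp R - 1) / Real.exp R)
    (hfeas : 0 ≤ q - β * (q + 1 / h2)) :
    ∀ p1 p2 : ℝ, 0 ≤ p1 → 0 ≤ p2 → p1 + p2 = q →
      Real.log (1 + p2 * h2 / (p1 * h2 + 1)) ≥ R →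
      Real.log (1 + p1 * h1) + Real.log (1 + p2 * h2 / (p1 * h2 + 1))
        ≤ Real.log (1 + (q - β * (q + 1 / h2)) * h1)
          + Real.log (1 + (β * (q + 1 / h2)) * h2
              / ((q - β * (q + 1 / h2)) * h2 + 1)) := by
  intro p1 p2 hp1 hp2 hp hrate
  refine sum_rate_mono hh2 hle hq hp1 ?_ hp (by ring)
  have a : 0 < p1 * h2 + 1 := by positivity
  have hE := Real.exp_pos R
  rw [ge_iff_le, Real.le_log_iff_exp_le (by positivity), weak_user_sinr_eq hp a,
    le_div_iff₀ a] at hrate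
  have hs : q - β * (q + 1 / h2) = ((1 + q * h2) / Real.exp R - 1) / h2 := by
    rw [hβ]
    field_simp
    ring
  rw [hs, le_div_iff₀ hh2, le_sub_iff_add_le, le_div_iff₀ hE]
  linarith
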